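/- Let C = H_{k,θ}[η](g) = ⟨g + ηθ^k(g), θ(g), ..., θ^{k-1}(g)⟩ be a twisted Gabidulin code with rk_q(g) = n, η ≠ 0, 2 ≤ k ≤ n−2, and let 1 ≤ r ≤ k−1. Then C + θ^r(C) = G_{k+r+1,θ}(g) = ⟨g, θ(g), ..., θ^{k+r}(g)⟩, provided k+r+1 ≤ n; in particular dim(C + θ^r(C)) = min{k+r+1, n}. -/

import Mathlib

open Submodule

noncomputable section

variable {E : Type} [Field E]

instance (σ : E ≃+* E) : RingHomSurjective (σ : E →+* E) := ⟨σ.surjective⟩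

/-- Entrywise application of a field automorphism to vectors, as a semilinear map. -/
def entrywiseR {n : ℕ} (σ : E ≃+* E) :
    (Fin n → E) →ₛₗ[(σ : E →+* E)] (Fin n → E) where
  toFun v := fun i => σ (v i)
  map_add' x y := by funext i; simp
  map_smul' r x := by funext i; simp [smul_eq_mul, map_mul]

/-- Image of a code under entrywise application of a ring automorphism. -/
def mapCodeR {n : ℕ} (σ : E ≃+* E) (C : Submodule E (Fin n → E)) :
    Submodule E (Fin n → E) :=
  C.map (entrywiseR σ)

/-- Image of a code under entrywise application of an F-algebra automorphism. -/
def mapCode {F : Type} [Field F] [Algebra F E] {n : ℕ} (σ : E ≃ₐ[F] E)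
    (C : Submodule E (Fin n → E)) : Submodule E (Fin n → E) :=
  mapCodeR σ.toRingEquiv C

/-- Right action of a matrix over the base field on a code. -/
def matAct (F : Type) [Field F] [Algebra F E] {n : ℕ} (A : Matrix (Fin n) (Fin n) F)
    (C : Submodule E (Fin n → E)) : Submodule E (Fin n → E) :=
  C.map ((A.map (algebraMap F E)).vecMulLinear)

/-- Semilinear equivalence of rank-metric codes: C₁ = τ(C₂)·A. -/
def CodeEquiv (F : Type) [Field F] [Algebra F E] {n : ℕ}
    (C₁ C₂ : Submodule E (Fin n → E)) : Prop :=
  ∃ (τ : E ≃+* E) (A : Matrix (Fin n) (Fin n) F), IsUnit A ∧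
    C₁ = matAct F A (mapCodeR τ C₂)

/-- Gabidulin code. -/
def Gab {F : Type} [Field F] [Algebra F E] {n : ℕ} (θ : E ≃ₐ[F] E) (k : ℕ)
    (g : Fin n → E) : Submodule E (Fin n → E) :=
  Submodule.span E (Set.range fun j : Fin k => fun i => (θ ^ (j : ℕ)) (g i))

/-- Sum of the images of C under the first i+1 powers of σ. -/
def sumCode {F : Type} [Field F] [Algebra F E] {n : ℕ} (σ : E ≃ₐ[F] E) (i : ℕ)
    (C : Submodule E (Fin n → E)) : Submodule E (Fin n → E) :=
  ⨆ j : Fin (i + 1), mapCode (σ ^ (j : ℕ)) C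

/-- Intersection of the images of C under the first i+1 powers of σ. -/
def interCode {F : Type} [Field F] [Algebra F E] {n : ℕ} (σ : E ≃ₐ[F] E) (i : ℕ)
    (C : Submodule E (Fin n → E)) : Submodule E (Fin n → E) :=
  ⨅ j : Fin (i + 1), mapCode (σ ^ (j : ℕ)) C

/-- Dual code with respect to the standard inner product. -/
def dualCode {n : ℕ} (C : Submodule E (Fin n → E)) : Submodule E (Fin n → E) where
  carrier := {u | ∀ v ∈ C, ∑ i, u i * v i = 0}
  add_mem' := by
    intro a b ha hb v hv
    simp only [Set.mem_setOf_eq] at *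
    simp only [Pi.add_apply, add_mul, Finset.sum_add_distrib, ha v hv, hb v hv, add_zero]
  zero_mem' := by intro v hv; simp
  smul_mem' := by
    intro c a ha v hv
    simp only [Set.mem_setOf_eq] at *
    simp only [Pi.smul_apply, smul_eq_mul, mul_assoc, ← Finset.mul_sum, ha v hv, mul_zero]

/-- Twisted Gabidulin code. -/
def TGab {F : Type} [Field F] [Algebra F E] {n : ℕ} (θ : E ≃ₐ[F] E) (k : ℕ) (η : E)
    (g : Fin n → E) : Submodule E (Fin n → E) :=
  Submodule.span E
    (insert (fun i => g i + η * (θ ^ k) (g i))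
      (Set.range fun j : Fin (k - 1) => fun i => (θ ^ ((j : ℕ) + 1)) (g i)))

/-!
Every `θ^j(g)` with `1 ≤ j < k + r` lies in `C` or in `θ^r(C)`, since `r < k` leaves no gap between
their two blocks of untwisted generators. In particular `θ^k(g)` and `θ^r(g)` can be subtracted
from the twisted generators, which leaves `g` and a nonzero multiple of `θ^{k+r}(g)`.

For the dimension, suppose that `θ^j(g_0) = ∑ a_i θ^j(g_i)` for `j = 0, …, n`, where `g_0, …, g_n`
are independent over the fixed field `F` of `θ`. Applying `θ⁻¹` to the equations with `j ≥ 1`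
replaces `a_i` by `θ⁻¹(a_i)`, so by uniqueness of the expansion (induction on `n`) the `a_i` lie
in `F`, and the equation with `j = 0` contradicts independence. So square Moore matrices are
invertible, and rectangular ones have full rank.
-/

section SpanRecovery

variable {R M : Type*} [Ring R] [AddCommGroup M] [Module R M]

theorem span_insert_add_eq_of_mem {s : Set M} {x y : M} (hy : y ∈ span R s) :
    span R (insert (x + y) s) = span R (insert x s) := by
  have hy' (z : M) : y ∈ span R (insert z s) := span_mono (Set.subset_insert z s) hy
  refine le_antisymm (span_le.mpr (Set.insert_subset ?_ ?_)) (span_le.mpr (Set.insert_subset ?_ ?_))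
  · exact add_mem (mem_span_of_mem (Set.mem_insert x s)) (hy' x)
  · exact (Set.subset_insert x s).trans subset_span
  · exact ((span R _).add_mem_iff_left (hy' _)).mp (mem_span_of_mem (Set.mem_insert (x + y) s))
  · exact (Set.subset_insert (x + y) s).trans subset_span

theorem span_insert_smul_eq_of_isUnit {s : Set M} {b : R} (hb : IsUnit b) (x : M) :
    span R (insert (b • x) s) = span R (insert x s) := by
  rw [span_insert, span_insert, span_singleton_smul_eq hb]

theorem span_twisted_sup_span_twisted_shift {k r : ℕ} (hr : 1 ≤ r) (hrk : r < k) (v : ℕ → M)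
    (a : R) {b : R} (hb : IsUnit b) :
    span R (insert (v 0 + a • v k) (v '' Set.Ico 1 k)) ⊔
        span R (insert (v r + b • v (k + r)) (v '' Set.Ico (1 + r) (k + r))) =
      span R (v '' Set.Iio (k + r + 1)) := by
  have hmem {j : ℕ} (hj : 1 ≤ j) (hjk : j < k + r) : v j ∈ span R (v '' Set.Ico 1 (k + r)) :=
    mem_span_of_mem (Set.mem_image_of_mem v ⟨hj, hjk⟩)
  have hunion : Set.Ico 1 k ∪ Set.Ico (1 + r) (k + r) = Set.Ico 1 (k + r) := by
    rw [Set.Ico_union_Ico' (by lia) (by lia), min_eq_left (by lia), max_eq_right (by lia)]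
  have hindices : insert 0 (insert (k + r) (Set.Ico 1 (k + r))) = Set.Iio (k + r + 1) := by
    ext j
    simp only [Set.mem_insert_iff, Set.mem_Ico, Set.mem_Iio]
    lia
  calc
    _ = span R (insert (v 0 + a • v k)
          (insert (v r + b • v (k + r)) (v '' Set.Ico 1 (k + r)))) := by
      rw [← span_union, Set.insert_union, Set.union_insert, ← Set.image_union, hunion]
    _ = span R (insert (v 0) (insert (v r + b • v (k + r)) (v '' Set.Ico 1 (k + r)))) :=
      span_insert_add_eq_of_mem
        (smul_mem _ a (span_mono (Set.subset_insert _ _) (hmem (by lia) (by lia))))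
    _ = span R (insert (v 0) (insert (v (k + r)) (v '' Set.Ico 1 (k + r)))) := by
      rw [span_insert, add_comm (v r), span_insert_add_eq_of_mem (hmem hr (by lia)),
        span_insert_smul_eq_of_isUnit hb, ← span_insert]
    _ = span R (v '' Set.Iio (k + r + 1)) := by
      rw [← Set.image_insert_eq, ← Set.image_insert_eq, hindices]

end SpanRecovery

section Moore

variable {K L : Type*} [Field K] [Field L] [Algebra K L]

/-- The vector `θ^j(g)`, the `j`-th row (counted from `0`) of every Moore matrix of `g`; both
families of codes are spanned by combinations of these rows. -/
def mooreRow {n : ℕ} (θ : L ≃ₐ[K] L) (g : Fin n → L) (j : ℕ) : Fin n → L :=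
  fun i => (θ ^ j) (g i)

/-- The `d × n` Moore matrix with entries `θ^j(g_i)`, whose row space is the Gabidulin code. -/
def mooreMatrix {n : ℕ} (θ : L ≃ₐ[K] L) (d : ℕ) (g : Fin n → L) : Matrix (Fin d) (Fin n) L :=
  Matrix.of fun j => mooreRow θ g j

theorem linearIndependent_col_mooreMatrix {θ : L ≃ₐ[K] L}
    (hθ : ∀ z, θ z = z → z ∈ Set.range (algebraMap K L)) {n : ℕ} {g : Fin n → L}
    (hg : LinearIndependent K g) : LinearIndependent L (mooreMatrix θ n g).col := by
  induction n with
  | zero => exact linearIndependent_empty_type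
  | succ n ih =>
    obtain ⟨htail, hhead⟩ := linearIndependent_finSucc.mp hg
    have hcols := ih htail
    refine linearIndependent_finSucc.mpr
      ⟨.of_comp (LinearMap.funLeft L L Fin.castSucc) hcols, fun hmem => hhead ?_⟩
    obtain ⟨a, ha⟩ := (mem_span_range_iff_exists_fun L).mp hmem
    have hrow (j : ℕ) (hj : j < n + 1) : ∑ i : Fin n, a i * (θ ^ j) (g i.succ) = (θ ^ j) (g 0) := by
      simpa [mooreMatrix, mooreRow, Fin.tail] using congrFun ha ⟨j, hj⟩
    have hrow_symm (j : ℕ) (hj : j < n) :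
        ∑ i : Fin n, θ.symm (a i) * (θ ^ j) (g i.succ) = (θ ^ j) (g 0) := by
      simpa [pow_succ'] using congrArg θ.symm (hrow (j + 1) (by lia))
    have hfixed : a = fun i => θ.symm (a i) := by
      refine funext (Fintype.linearIndependent_iffₛ.mp hcols _ _ (funext fun j => ?_))
      simpa [mooreMatrix, mooreRow, Fin.tail] using
        (hrow j (by lia)).trans (hrow_symm j j.isLt).symm
    choose c hc using fun i => hθ (a i) (θ.eq_symm_apply.mp (congrFun hfixed i))
    refine (mem_span_range_iff_exists_fun K).mpr ⟨c, ?_⟩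
    simpa [Algebra.smul_def, hc, Fin.tail] using hrow 0 (by lia)

theorem rank_mooreMatrix {θ : L ≃ₐ[K] L}
    (hθ : ∀ z, θ z = z → z ∈ Set.range (algebraMap K L)) {n : ℕ} {g : Fin n → L}
    (hg : LinearIndependent K g) (d : ℕ) : (mooreMatrix θ d g).rank = min d n := by
  refine le_antisymm (le_min (Matrix.rank_le_height _) (Matrix.rank_le_width _)) ?_
  let g' : Fin (min d n) → L := g ∘ Fin.castLE (min_le_right d n)
  have hg' : LinearIndependent K g' := hg.comp _ (Fin.castLE_injective _)
  calc
    min d n = (mooreMatrix θ (min d n) g').transpose.rank := by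
      rw [LinearIndependent.rank_matrix (linearIndependent_col_mooreMatrix hθ hg'),
        Fintype.card_fin]
    _ = (mooreMatrix θ (min d n) g').rank := Matrix.rank_transpose _
    _ ≤ (mooreMatrix θ d g).rank :=
      Matrix.rank_submatrix_le (mooreMatrix θ d g) (Fin.castLE (min_le_left d n))
        (Fin.castLE (min_le_right d n))

theorem mem_range_algebraMap_of_forall_mem_zpowers [IsGalois K L] {θ : L ≃ₐ[K] L}
    (hθ : ∀ τ : L ≃ₐ[K] L, τ ∈ Subgroup.zpowers θ) (z : L) (hz : θ z = z) :
    z ∈ Set.range (algebraMap K L) := by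
  have hstab : Subgroup.zpowers θ ≤ MulAction.stabilizer (L ≃ₐ[K] L) z :=
    Subgroup.zpowers_le.mpr hz
  exact (InfiniteGalois.mem_range_algebraMap_iff_fixed z).mpr fun τ => hstab (hθ τ)

end Moore

section Codes

variable {F : Type} [Field F] [Algebra F E] {n : ℕ}

theorem Gab_eq_span_mooreRow (θ : E ≃ₐ[F] E) (k : ℕ) (g : Fin n → E) :
    Gab θ k g = span E (mooreRow θ g '' Set.Iio k) := by
  rw [← Fin.range_val, ← Set.range_comp]
  rfl

theorem TGab_eq_span_mooreRow (θ : E ≃ₐ[F] E) (k : ℕ) (η : E) (g : Fin n → E) :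
    TGab θ k η g = span E (insert (mooreRow θ g 0 + η • mooreRow θ g k)
      (mooreRow θ g '' Set.Ico 1 k)) := by
  have hindices : Set.range (fun j : Fin (k - 1) => (j : ℕ) + 1) = Set.Ico 1 k := by
    ext j
    simp only [Set.mem_range, Set.mem_Ico]
    exact ⟨by rintro ⟨i, rfl⟩; lia, fun hj => ⟨⟨j - 1, by lia⟩, by simp only; lia⟩⟩
  rw [← hindices, ← Set.range_comp]
  rfl

theorem entrywiseR_pow_mooreRow (θ : E ≃ₐ[F] E) (r : ℕ) (g : Fin n → E) (j : ℕ) :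
    entrywiseR (θ ^ r).toRingEquiv (mooreRow θ g j) = mooreRow θ g (j + r) := by
  funext i
  change (θ ^ r) ((θ ^ j) (g i)) = (θ ^ (j + r)) (g i)
  rw [add_comm j, pow_add, AlgEquiv.mul_apply]

theorem mapCode_pow_TGab (θ : E ≃ₐ[F] E) (k r : ℕ) (η : E) (g : Fin n → E) :
    mapCode (θ ^ r) (TGab θ k η g) =
      span E (insert (mooreRow θ g r + (θ ^ r) η • mooreRow θ g (k + r))
        (mooreRow θ g '' Set.Ico (1 + r) (k + r))) := by
  rw [mapCode, mapCodeR, TGab_eq_span_mooreRow, map_span, Set.image_insert_eq, map_add,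
    LinearMap.map_smulₛₗ]
  simp only [Set.image_image, entrywiseR_pow_mooreRow, zero_add, ← Set.image_add_const_Ico]
  rfl

theorem TGab_sup_mapCode_pow {k r : ℕ} (hr : 1 ≤ r) (hrk : r < k) (θ : E ≃ₐ[F] E) {η : E}
    (hη : η ≠ 0) (g : Fin n → E) :
    TGab θ k η g ⊔ mapCode (θ ^ r) (TGab θ k η g) = Gab θ (k + r + 1) g := by
  rw [mapCode_pow_TGab, TGab_eq_span_mooreRow, Gab_eq_span_mooreRow]
  exact span_twisted_sup_span_twisted_shift hr hrk (mooreRow θ g) η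
    ((map_ne_zero (θ ^ r)).mpr hη).isUnit

theorem finrank_Gab {θ : E ≃ₐ[F] E} (hθ : ∀ z, θ z = z → z ∈ Set.range (algebraMap F E))
    {g : Fin n → E} (hg : LinearIndependent F g) (d : ℕ) :
    Module.finrank E (Gab θ d g) = min d n :=
  (mooreMatrix θ d g).rank_eq_finrank_span_row.symm.trans (rank_mooreMatrix hθ hg d)

end Codes

theorem stmt14_general {F : Type} [Field F] [Algebra F E] {n k r : ℕ} (hr : 1 ≤ r) (hrk : r < k)
    {θ : E ≃ₐ[F] E} (hθ : ∀ z, θ z = z → z ∈ Set.range (algebraMap F E)) {η : E} (hη : η ≠ 0)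
    {g : Fin n → E} (hg : LinearIndependent F g) :
    TGab θ k η g ⊔ mapCode (θ ^ r) (TGab θ k η g) = Gab θ (k + r + 1) g ∧
      Module.finrank E (TGab θ k η g ⊔ mapCode (θ ^ r) (TGab θ k η g) :
          Submodule E (Fin n → E)) = min (k + r + 1) n := by
  have hsup := TGab_sup_mapCode_pow hr hrk θ hη g
  exact ⟨hsup, hsup ▸ finrank_Gab hθ hg (k + r + 1)⟩

/-- for `1 ≤ r ≤ k−1` and `k+r+1 ≤ n`,
`H_{k,θ}[η](g) + θ^r(H_{k,θ}[η](g)) = G_{k+r+1,θ}(g)`,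
of dimension `min (k+r+1) n`. -/
theorem stmt14 {F : Type} [Field F] [Algebra F E] [Fintype F] [Fintype E]
    (q m n k r : ℕ) (hq : IsPrimePow q)
    (hF : Fintype.card F = q) (hE : Fintype.card E = q ^ m)
    (hk2 : 2 ≤ k) (hkn : k ≤ n - 2) (hnm : n ≤ m)
    (hr1 : 1 ≤ r) (hr2 : r ≤ k - 1) (hkr : k + r + 1 ≤ n)
    (θ : E ≃ₐ[F] E) (hθ : ∀ τ : E ≃ₐ[F] E, τ ∈ Subgroup.zpowers θ)
    (η : E) (hη : η ≠ 0)
    (g : Fin n → E)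
    (hg : Module.finrank F (Submodule.span F (Set.range g)) = n) :
    TGab θ k η g ⊔ mapCode (θ ^ r) (TGab θ k η g) = Gab θ (k + r + 1) g ∧
      Module.finrank E (TGab θ k η g ⊔ mapCode (θ ^ r) (TGab θ k η g) :
          Submodule E (Fin n → E)) = min (k + r + 1) n := by
  have hg' : LinearIndependent F g :=
    linearIndependent_iff_card_eq_finrank_span.mpr ((Fintype.card_fin n).trans hg.symm)
  exact stmt14_general hr1 (by lia) (mem_range_algebraMap_of_forall_mem_zpowers hθ) hη hg'
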